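/- Let G be a finite simple graph on n ≥ 1 vertices with maximum degree Δ(G), and let p = (Δ(G)+1)/n. Then the p-influencing set of G is exactly the set of vertices of G whose degree equals Δ(G); that is, a vertex v belongs to some γ_p-set if and only if deg(v) = Δ(G). -/

import Mathlib

/-!
For `p = (Δ(G) + 1) / n`, a set is `p`-dominating exactly when its closed neighborhood has at least
`Δ(G) + 1` elements. The closed neighborhood of a vertex `v` has `deg v + 1` elements, so `{v}` is
`p`-dominating if and only if `deg v = Δ(G)`. Such a vertex exists and `∅` is not `p`-dominating, so
`γ_p(G) = 1`, and the `γ_p`-sets are the `p`-dominating singletons.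
-/

open SimpleGraph

/-- The closed neighborhood `N[S]` of a set of vertices `S`:
all vertices equal or adjacent to some vertex of `S`. -/
def closedNbhd {V : Type*} (G : SimpleGraph V) (S : Set V) : Set V :=
  {w | ∃ u ∈ S, w = u ∨ G.Adj u w}

/-- `S` is a `p`-dominating set of `G` if `N[S]` contains at least a proportion `p`
of the vertices. -/
def IsPDomSet {V : Type*} [Fintype V] (G : SimpleGraph V) (p : ℝ) (S : Set V) : Prop :=
  p * (Fintype.card V : ℝ) ≤ ((closedNbhd G S).ncard : ℝ)

/-- The `p`-domination number `γ_p(G)`: the minimum cardinality of a `p`-dominating set. -/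
noncomputable def pDomNum {V : Type*} [Fintype V] (G : SimpleGraph V) (p : ℝ) : ℕ :=
  sInf {k : ℕ | ∃ S : Set V, IsPDomSet G p S ∧ S.ncard = k}

/-- `S` is a `γ_p`-set: a `p`-dominating set of minimum cardinality `γ_p(G)`. -/
def IsGammaPSet {V : Type*} [Fintype V] (G : SimpleGraph V) (p : ℝ) (S : Set V) : Prop :=
  IsPDomSet G p S ∧ S.ncard = pDomNum G p

/-- `v` belongs to the `p`-influencing set of `G`, i.e. the union of all `γ_p`-sets. -/
def InInfluence {V : Type*} [Fintype V] (G : SimpleGraph V) (p : ℝ) (v : V) : Prop :=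
  ∃ S : Set V, IsGammaPSet G p S ∧ v ∈ S

section ClosedNbhd

variable {V : Type*} (G : SimpleGraph V)

theorem closedNbhd_empty : closedNbhd G ∅ = ∅ := by
  simp [closedNbhd]

theorem closedNbhd_singleton (v : V) : closedNbhd G {v} = insert v (G.neighborSet v) := by
  ext w
  simp [closedNbhd]

theorem ncard_closedNbhd_singleton (v : V) [Finite (G.neighborSet v)] :
    (closedNbhd G {v}).ncard = (G.neighborSet v).ncard + 1 := by
  rw [closedNbhd_singleton, Set.ncard_insert_of_notMem G.notMem_neighborSet_self]

end ClosedNbhd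

section PDomination

variable {V : Type*} [Fintype V] {G : SimpleGraph V} {p : ℝ} {S : Set V} {v : V}

theorem isPDomSet_div_card_iff [Nonempty V] {t : ℝ} :
    IsPDomSet G (t / Fintype.card V) S ↔ t ≤ (closedNbhd G S).ncard := by
  rw [IsPDomSet, div_mul_cancel₀ _ (Nat.cast_ne_zero.2 Fintype.card_ne_zero)]

theorem isPDomSet_add_one_div_card_singleton_iff [Nonempty V] {k : ℕ} :
    IsPDomSet G (((k : ℝ) + 1) / Fintype.card V) {v} ↔ k ≤ (G.neighborSet v).ncard := by
  rw [isPDomSet_div_card_iff, ncard_closedNbhd_singleton, Nat.cast_add_one, add_le_add_iff_right,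
    Nat.cast_le]

theorem IsPDomSet.nonempty [Nonempty V] (hS : IsPDomSet G p S) (hp : 0 < p) : S.Nonempty := by
  rw [Set.nonempty_iff_ne_empty]
  rintro rfl
  have hle : p * (Fintype.card V : ℝ) ≤ 0 := by
    simpa only [IsPDomSet, closedNbhd_empty, Set.ncard_empty, Nat.cast_zero] using hS
  have hpos : 0 < p * (Fintype.card V : ℝ) := mul_pos hp (Nat.cast_pos.2 Fintype.card_pos)
  exact hle.not_gt hpos

theorem IsPDomSet.pDomNum_le (hS : IsPDomSet G p S) : pDomNum G p ≤ S.ncard :=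
  Nat.sInf_le ⟨S, hS, rfl⟩

theorem IsPDomSet.exists_isGammaPSet (hS : IsPDomSet G p S) : ∃ T, IsGammaPSet G p T :=
  Nat.sInf_mem (s := {k | ∃ T : Set V, IsPDomSet G p T ∧ T.ncard = k}) ⟨S.ncard, S, hS, rfl⟩

theorem IsPDomSet.pDomNum_pos [Nonempty V] (hS : IsPDomSet G p S) (hp : 0 < p) :
    0 < pDomNum G p := by
  obtain ⟨T, hT, hcard⟩ := hS.exists_isGammaPSet
  rw [← hcard, Set.ncard_pos]
  exact hT.nonempty hp

theorem pDomNum_eq_one_of_isPDomSet_singleton [Nonempty V] (hv : IsPDomSet G p {v}) (hp : 0 < p) :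
    pDomNum G p = 1 :=
  le_antisymm (hv.pDomNum_le.trans_eq (Set.ncard_singleton v)) (hv.pDomNum_pos hp)

theorem inInfluence_iff_isPDomSet_singleton (hγ : pDomNum G p = 1) :
    InInfluence G p v ↔ IsPDomSet G p {v} := by
  constructor
  · rintro ⟨S, ⟨hS, hcard⟩, hv⟩
    obtain ⟨u, rfl⟩ := Set.ncard_eq_one.1 (hcard.trans hγ)
    rwa [Set.mem_singleton_iff.1 hv]
  · intro hv
    exact ⟨{v}, ⟨hv, (Set.ncard_singleton v).trans hγ.symm⟩, Set.mem_singleton v⟩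

end PDomination

theorem stmt12 {V : Type*} [Fintype V] [Nonempty V] (G : SimpleGraph V)
    (Δ : ℕ)
    (hΔ : Δ = Finset.univ.sup' Finset.univ_nonempty
        (fun v : V => (G.neighborSet v).ncard)) :
    ∀ v : V, InInfluence G (((Δ : ℝ) + 1) / (Fintype.card V : ℝ)) v ↔
      (G.neighborSet v).ncard = Δ := by
  obtain ⟨u, -, hu⟩ := Finset.exists_mem_eq_sup' Finset.univ_nonempty
    (fun v : V => (G.neighborSet v).ncard)
  have hdom : IsPDomSet G (((Δ : ℝ) + 1) / (Fintype.card V : ℝ)) {u} :=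
    isPDomSet_add_one_div_card_singleton_iff.2 (hΔ.trans hu).le
  have hγ : pDomNum G (((Δ : ℝ) + 1) / (Fintype.card V : ℝ)) = 1 :=
    pDomNum_eq_one_of_isPDomSet_singleton hdom (by positivity)
  intro v
  have hle : (G.neighborSet v).ncard ≤ Δ :=
    hΔ ▸ Finset.le_sup' (fun v : V => (G.neighborSet v).ncard) (Finset.mem_univ v)
  rw [inInfluence_iff_isPDomSet_singleton hγ, isPDomSet_add_one_div_card_singleton_iff,
    hle.ge_iff_eq]
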